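/- arXiv:math/0303024 — 2 statements merged into one kernel-verified Lean document; each statement's English description precedes it below -/
import Mathlib

section
/- A continuous function f : ℝ → ℂ belongs to 𝓖 if and only if there exists a bounded continuously differentiable function f̃ : ℂ → ℂ with f̃|_ℝ = f such that ∂f̃/∂z̄ has compact support and for every N ∈ ℕ there is a constant C with |∂f̃/∂z̄(z)| ≤ C·|Im z|^N for all z ∈ ℂ. -/
open MeasureTheory Complex

noncomputable section

/-- The Cauchy–Riemann operator `∂F/∂z̄ = (∂F/∂x + i ∂F/∂y)/2`. -/
def dbar (F : ℂ → ℂ) (z : ℂ) : ℂ :=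
  (fderiv ℝ F z 1 + Complex.I * fderiv ℝ F z Complex.I) / 2

/-- The space `𝓖` of smooth functions on `ℝ` which, for some `R > 0`, agree for
`|x| > R` with a bounded holomorphic function on `{|z| > R}`. -/
def MemG (f : ℝ → ℂ) : Prop :=
  ContDiff ℝ (⊤ : ℕ∞) f ∧ ∃ R : ℝ, 0 < R ∧ ∃ g : ℂ → ℂ,
    DifferentiableOn ℂ g {z : ℂ | R < ‖z‖} ∧
    (∃ M : ℝ, ∀ z : ℂ, R < ‖z‖ → ‖g z‖ ≤ M) ∧
    (∀ x : ℝ, R < |x| → g x = f x)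

/-!
Suppose `F` is a bounded `C¹` extension whose `∂F/∂z̄` is flat on the real axis and compactly
supported. Where `∂F/∂z̄ = 0`, `F` is holomorphic. Near a real point, cut `F` off to a compactly
supported `u`; the Cauchy–Pompeiu formula gives `u x = -π⁻¹ ∫ (∂u/∂w̄) / (w - x)`, and as
`∂u/∂w̄ = O(|w - x| ^ N)` for every `N`, the integral is infinitely often differentiable in `x`.

Conversely, a compactly supported smooth `h` on `ℝ` has the compactly supported extension
`∑ cₙ(y) (i y)ⁿ h⁽ⁿ⁾(x) / n!`, where the cutoffs `cₙ` force convergence as in Borel's theorem. The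
`∂/∂z̄` of its partial sums telescopes near the real axis, so it is flat there. Wherever `h` is
locally constant the extension takes the same constant value, so extending a bump function yields
`φ` with flat `∂φ/∂z̄` and `φ = 1` near `{|z| ≤ R}`. If `g` is the given holomorphic function on
`{|z| > R}` and `E` extends `φ f`, then `(1 - φ) g + E` is the required extension of `f`.
-/

open Filter Set Topology
open scoped ContDiff ComplexConjugate

section Dbar

variable {F G : ℂ → ℂ} {z : ℂ}

lemma dbar_add (hF : DifferentiableAt ℝ F z) (hG : DifferentiableAt ℝ G z) :
    dbar (fun w => F w + G w) z = dbar F z + dbar G z := by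
  simp only [dbar, fderiv_fun_add hF hG, add_apply]
  ring

lemma dbar_sum {ι : Type*} {s : Finset ι} {u : ι → ℂ → ℂ}
    (hu : ∀ i ∈ s, DifferentiableAt ℝ (u i) z) :
    dbar (fun w => ∑ i ∈ s, u i w) z = ∑ i ∈ s, dbar (u i) z := by
  simp only [dbar, fderiv_fun_sum hu, sum_apply, Finset.mul_sum,
    ← Finset.sum_add_distrib, Finset.sum_div]

lemma dbar_mul (hF : DifferentiableAt ℝ F z) (hG : DifferentiableAt ℝ G z) :
    dbar (fun w => F w * G w) z = dbar F z * G z + F z * dbar G z := by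
  simp only [dbar, fderiv_fun_mul hF hG, add_apply,
    smul_apply, smul_eq_mul]
  ring

lemma dbar_const_sub (c : ℂ) (F : ℂ → ℂ) (z : ℂ) : dbar (fun w => c - F w) z = -dbar F z := by
  simp only [dbar, fderiv_const_sub, neg_apply]
  ring

lemma dbar_const (c z : ℂ) : dbar (fun _ => c) z = 0 := by
  simp [dbar]

lemma dbar_congr (h : F =ᶠ[𝓝 z] G) : dbar F z = dbar G z := by
  rw [dbar, dbar, h.fderiv_eq]

lemma dbar_comp_add_right (F : ℂ → ℂ) (a z : ℂ) : dbar (fun w => F (w + a)) z = dbar F (z + a) := by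
  simp only [dbar, fderiv_comp_add_right]

lemma differentiableAt_complex_iff_dbar_eq_zero :
    DifferentiableAt ℂ F z ↔ DifferentiableAt ℝ F z ∧ dbar F z = 0 := by
  rw [differentiableAt_complex_iff_differentiableAt_real]
  refine and_congr_right fun _ => ?_
  rw [dbar, smul_eq_mul]
  constructor <;> intro h
  · linear_combination I / 2 * h + fderiv ℝ F z 1 / 2 * I_mul_I
  · linear_combination -2 * I * h + fderiv ℝ F z I * I_mul_I

lemma fderiv_add_I_mul_fderiv_I_mul (F : ℂ → ℂ) (z v : ℂ) :
    fderiv ℝ F z v + I * fderiv ℝ F z (I * v) = 2 * conj v * dbar F z := by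
  have hv : v = v.re • (1 : ℂ) + v.im • I := by simp [re_add_im]
  have hIv : I * v = v.re • I - v.im • (1 : ℂ) := by
    nth_rw 1 [hv]
    simp only [real_smul]
    linear_combination (v.im : ℂ) * I_mul_I
  have hconj : conj v = v.re - v.im * I := by
    apply Complex.ext <;> simp
  rw [hIv, hconj]
  nth_rw 1 [hv]
  simp only [map_add, map_sub, map_smul]
  simp only [real_smul, dbar]
  linear_combination (v.im * fderiv ℝ F z I) * I_mul_I

lemma norm_dbar_le (F : ℂ → ℂ) (z : ℂ) : ‖dbar F z‖ ≤ ‖fderiv ℝ F z‖ := by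
  have h1 : ‖fderiv ℝ F z 1‖ ≤ ‖fderiv ℝ F z‖ := by
    simpa using (fderiv ℝ F z).le_opNorm 1
  have hI : ‖I * fderiv ℝ F z I‖ ≤ ‖fderiv ℝ F z‖ := by
    simpa using (fderiv ℝ F z).le_opNorm I
  rw [dbar, norm_div, norm_ofNat]
  linarith [norm_add_le (fderiv ℝ F z 1) (I * fderiv ℝ F z I)]

lemma continuous_dbar (hF : ContDiff ℝ 1 F) : Continuous (dbar F) := by
  have := hF.continuous_fderiv one_ne_zero
  unfold dbar
  fun_prop

lemma tsupport_dbar_subset (F : ℂ → ℂ) : tsupport (dbar F) ⊆ tsupport F := by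
  refine closure_minimal (fun z hz => ?_) (isClosed_tsupport F)
  contrapose! hz
  rw [Function.notMem_support, dbar_congr (notMem_tsupport_iff_eventuallyEq.1 hz)]
  exact dbar_const 0 z

lemma hasCompactSupport_dbar (hF : HasCompactSupport F) : HasCompactSupport (dbar F) :=
  hF.of_isClosed_subset (isClosed_tsupport _) (tsupport_dbar_subset F)

end Dbar

/-- Vanishing to infinite order on the real axis, uniformly on `ℂ`. -/
def FlatOnReal (p : ℂ → ℂ) : Prop :=
  ∀ N : ℕ, ∃ C : ℝ, ∀ z : ℂ, ‖p z‖ ≤ C * |z.im| ^ N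

section FlatOnReal

variable {p q : ℂ → ℂ}

lemma FlatOnReal.add (hp : FlatOnReal p) (hq : FlatOnReal q) :
    FlatOnReal (fun z => p z + q z) := fun N => by
  obtain ⟨C, hC⟩ := hp N
  obtain ⟨D, hD⟩ := hq N
  refine ⟨C + D, fun z => ?_⟩
  rw [add_mul]
  exact norm_add_le_of_le (hC z) (hD z)

lemma FlatOnReal.of_norm_le_mul {M : ℝ} (hp : FlatOnReal p) (hM : 0 ≤ M)
    (h : ∀ z, ‖q z‖ ≤ M * ‖p z‖) : FlatOnReal q := fun N => by
  obtain ⟨C, hC⟩ := hp N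
  refine ⟨M * C, fun z => (h z).trans ?_⟩
  rw [mul_assoc]
  gcongr
  exact hC z

lemma exists_norm_le_mul_abs_im_pow {B C δ : ℝ} {N M : ℕ} (hNM : N ≤ M) (hδ : 0 < δ)
    (hB : ∀ z, ‖p z‖ ≤ B) (hC : ∀ z, |z.im| < δ → ‖p z‖ ≤ C * |z.im| ^ M) :
    ∃ D, ∀ z, ‖p z‖ ≤ D * |z.im| ^ N := by
  have hB0 : 0 ≤ B := (norm_nonneg _).trans (hB 0)
  refine ⟨|C| * δ ^ (M - N) + B / δ ^ N, fun z => ?_⟩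
  rcases lt_or_ge |z.im| δ with hz | hz
  · calc ‖p z‖ ≤ |C| * |z.im| ^ M := (hC z hz).trans (by gcongr; exact le_abs_self C)
      _ = |C| * |z.im| ^ (M - N) * |z.im| ^ N := by rw [mul_assoc, pow_sub_mul_pow _ hNM]
      _ ≤ |C| * δ ^ (M - N) * |z.im| ^ N := by gcongr
      _ ≤ (|C| * δ ^ (M - N) + B / δ ^ N) * |z.im| ^ N := by
        gcongr
        exact le_add_of_nonneg_right (by positivity)
  · calc ‖p z‖ ≤ B / δ ^ N * δ ^ N := by rw [div_mul_cancel₀ _ (by positivity)]; exact hB z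
      _ ≤ B / δ ^ N * |z.im| ^ N := by gcongr
      _ ≤ (|C| * δ ^ (M - N) + B / δ ^ N) * |z.im| ^ N := by
        gcongr
        exact le_add_of_nonneg_left (by positivity)

end FlatOnReal

/-- `C¹` functions on `ℂ` that are almost analytic along the real axis: `∂F/∂z̄` vanishes there
to infinite order. No boundedness or support condition is included. -/
structure IsAlmostAnalytic (F : ℂ → ℂ) : Prop where
  contDiff : ContDiff ℝ 1 F
  flat_dbar : FlatOnReal (dbar F)

section IsAlmostAnalytic

variable {F G φ g : ℂ → ℂ} {U : Set ℂ}

lemma IsAlmostAnalytic.differentiable (hF : IsAlmostAnalytic F) : Differentiable ℝ F :=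
  hF.contDiff.differentiable one_ne_zero

lemma IsAlmostAnalytic.add (hF : IsAlmostAnalytic F) (hG : IsAlmostAnalytic G) :
    IsAlmostAnalytic (fun z => F z + G z) where
  contDiff := hF.contDiff.add hG.contDiff
  flat_dbar := by
    have hdbar : dbar (fun z => F z + G z) = fun z => dbar F z + dbar G z :=
      funext fun z => dbar_add (hF.differentiable z) (hG.differentiable z)
    rw [hdbar]
    exact hF.flat_dbar.add hG.flat_dbar

lemma eventuallyEq_zero_one_sub_mul {z : ℂ} (hφ : φ =ᶠ[𝓝 z] fun _ => 1) :
    (fun w => (1 - φ w) * g w) =ᶠ[𝓝 z] fun _ => 0 := by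
  filter_upwards [hφ] with w hw
  rw [hw, sub_self, zero_mul]

lemma contDiff_one_sub_mul (hU : IsOpen U) (hφ : ContDiff ℝ 1 φ)
    (hφ1 : ∀ z ∉ U, φ =ᶠ[𝓝 z] fun _ => 1) (hg : DifferentiableOn ℂ g U) :
    ContDiff ℝ 1 (fun z => (1 - φ z) * g z) := by
  rw [contDiff_iff_contDiffAt]
  intro z
  by_cases hz : z ∈ U
  · have hgz : ContDiffAt ℂ 1 g z := (hg.analyticAt (hU.mem_nhds hz)).contDiffAt
    exact (contDiffAt_const.sub hφ.contDiffAt).mul (hgz.restrict_scalars ℝ)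
  · exact contDiffAt_const.congr_of_eventuallyEq (eventuallyEq_zero_one_sub_mul (hφ1 z hz))

lemma dbar_one_sub_mul (hU : IsOpen U) (hφ : Differentiable ℝ φ)
    (hφ1 : ∀ z ∉ U, φ =ᶠ[𝓝 z] fun _ => 1) (hg : DifferentiableOn ℂ g U) (z : ℂ) :
    dbar (fun w => (1 - φ w) * g w) z = -dbar φ z * g z := by
  by_cases hz : z ∈ U
  · obtain ⟨hgz, hdbar⟩ := differentiableAt_complex_iff_dbar_eq_zero.1
      (hg.differentiableAt (hU.mem_nhds hz))
    rw [dbar_mul ((hφ z).const_sub 1) hgz, hdbar, dbar_const_sub, mul_zero, add_zero]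
  · rw [dbar_congr (eventuallyEq_zero_one_sub_mul (hφ1 z hz)), dbar_congr (hφ1 z hz), dbar_const,
      dbar_const, neg_zero, zero_mul]

lemma IsAlmostAnalytic.one_sub_mul {M : ℝ} (hU : IsOpen U) (hφ : IsAlmostAnalytic φ)
    (hφ1 : ∀ z ∉ U, φ =ᶠ[𝓝 z] fun _ => 1) (hg : DifferentiableOn ℂ g U)
    (hM : ∀ z ∈ U, ‖g z‖ ≤ M) : IsAlmostAnalytic (fun z => (1 - φ z) * g z) where
  contDiff := contDiff_one_sub_mul hU hφ.contDiff hφ1 hg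
  flat_dbar := by
    refine hφ.flat_dbar.of_norm_le_mul (abs_nonneg M) fun z => ?_
    rw [dbar_one_sub_mul hU hφ.differentiable hφ1 hg, norm_mul, norm_neg, mul_comm]
    by_cases hz : z ∈ U
    · gcongr
      exact (hM z hz).trans (le_abs_self M)
    · simp [dbar_congr (hφ1 z hz), dbar_const]

lemma exists_norm_one_sub_mul_le {B M : ℝ} (hB : ∀ z, ‖φ z‖ ≤ B) (hφ1 : ∀ z ∉ U, φ z = 1)
    (hM : ∀ z ∈ U, ‖g z‖ ≤ M) : ∃ C, ∀ z, ‖(1 - φ z) * g z‖ ≤ C := by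
  have hB0 : 0 ≤ B := (norm_nonneg _).trans (hB 0)
  refine ⟨(1 + B) * |M|, fun z => ?_⟩
  by_cases hz : z ∈ U
  · have h1 : ‖1 - φ z‖ ≤ 1 + B := norm_sub_le_of_le norm_one.le (hB z)
    rw [norm_mul]
    gcongr
    exact (hM z hz).trans (le_abs_self M)
  · rw [hφ1 z hz, sub_self, zero_mul, norm_zero]
    positivity

end IsAlmostAnalytic

section ProductFunction

variable {q : ℝ → ℝ} {a : ℝ → ℂ} {q' : ℝ} {a' : ℂ} {z : ℂ}

lemma hasFDerivAt_im_smul_re (hq : HasDerivAt q q' z.im) (ha : HasDerivAt a a' z.re) :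
    HasFDerivAt (fun w : ℂ => q w.im • a w.re)
      (q z.im • reCLM.smulRight a' + (q' • imCLM).smulRight (a z.re)) z := by
  have hqim : HasFDerivAt (fun w : ℂ => q w.im) (q' • imCLM) z :=
    hq.comp_hasFDerivAt z imCLM.hasFDerivAt
  have hare : HasFDerivAt (fun w : ℂ => a w.re) (reCLM.smulRight a') z := by
    refine (ha.hasFDerivAt.comp z reCLM.hasFDerivAt).congr_fderiv ?_
    ext v
    simp
  exact hqim.smul hare

lemma dbar_im_smul_re (hq : HasDerivAt q q' z.im) (ha : HasDerivAt a a' z.re) :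
    dbar (fun w : ℂ => q w.im • a w.re) z = (q z.im * a' + I * (q' * a z.re)) / 2 := by
  rw [dbar, (hasFDerivAt_im_smul_re hq ha).fderiv]
  simp

lemma norm_fderiv_im_smul_re_le (hq : HasDerivAt q q' z.im) (ha : HasDerivAt a a' z.re) :
    ‖fderiv ℝ (fun w : ℂ => q w.im • a w.re) z‖ ≤ |q z.im| * ‖a'‖ + |q'| * ‖a z.re‖ := by
  rw [(hasFDerivAt_im_smul_re hq ha).fderiv]
  refine norm_add_le_of_le ?_ ?_
  · rw [norm_smul, ContinuousLinearMap.norm_smulRight_apply, reCLM_norm, one_mul, Real.norm_eq_abs]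
  · rw [ContinuousLinearMap.norm_smulRight_apply, norm_smul, imCLM_norm, mul_one, Real.norm_eq_abs]

end ProductFunction

section Cutoff

lemma exists_abs_pow_mul_le {P : ℝ → ℝ} (hP : Continuous P) (hP0 : ∀ s, 1 < |s| → P s = 0) :
    ∃ A, ∀ k m : ℕ, m ≤ k → ∀ s, |s ^ k * P s| ≤ A * |s| ^ m := by
  obtain ⟨A, hA⟩ := (isCompact_Icc (a := (-1 : ℝ)) (b := 1)).exists_bound_of_continuousOn
    hP.continuousOn
  have hA0 : 0 ≤ A := (norm_nonneg _).trans (hA 0 (by norm_num))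
  refine ⟨A, fun k m hmk s => ?_⟩
  rcases lt_or_ge 1 |s| with hs | hs
  · rw [hP0 s hs, mul_zero, abs_zero]
    positivity
  · rw [abs_mul, abs_pow, mul_comm]
    exact mul_le_mul (hA s (abs_le.1 hs)) (pow_le_pow_of_le_one (abs_nonneg s) hs hmk)
      (by positivity) hA0

lemma exists_abs_pow_mul_and_deriv_le {χ : ℝ → ℝ} (hχ : ContDiff ℝ 1 χ)
    (hχ0 : ∀ s, 1 < |s| → χ s = 0) (k : ℕ) :
    ∃ A, ∀ m ≤ k, ∀ s, |s ^ (k + 2) * χ s| ≤ A * |s| ^ m ∧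
      |deriv (fun s => s ^ (k + 2) * χ s) s| ≤ A * |s| ^ m := by
  have hχ'0 : ∀ s, 1 < |s| → deriv χ s = 0 := fun s hs => by
    have hzero : χ =ᶠ[𝓝 s] fun _ => 0 := by
      filter_upwards [continuous_abs.continuousAt.eventually (lt_mem_nhds hs)] with t ht
        using hχ0 t ht
    rw [hzero.deriv_eq, deriv_const]
  have hderiv : ∀ s, deriv (fun s => s ^ (k + 2) * χ s) s =
      s ^ k * ((k + 2) * s * χ s + s ^ 2 * deriv χ s) := fun s => by
    rw [((hasDerivAt_pow (k + 2) s).fun_mul (hχ.differentiable one_ne_zero s).hasDerivAt).deriv]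
    push_cast
    ring
  obtain ⟨A, hA⟩ := exists_abs_pow_mul_le (P := χ) hχ.continuous hχ0
  obtain ⟨B, hB⟩ := exists_abs_pow_mul_le
    (P := fun s => (k + 2) * s * χ s + s ^ 2 * deriv χ s)
    (by have := hχ.continuous; have := hχ.continuous_deriv le_rfl; fun_prop)
    (fun s hs => by simp only [hχ0 s hs, hχ'0 s hs]; ring)
  refine ⟨max A B, fun m hm s => ⟨?_, ?_⟩⟩
  · refine (hA (k + 2) m (by lia) s).trans ?_
    gcongr
    exact le_max_left A B
  · rw [hderiv]
    refine (hB k m hm s).trans ?_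
    gcongr
    exact le_max_right A B

-- Dilating `χ` to `χ (t y)` gains a factor `t⁻¹`, even after one differentiation.
lemma exists_dilation_abs_pow_mul_le {χ : ℝ → ℝ} {A η : ℝ} {k : ℕ} (hη : 0 < η)
    (hA : ∀ m ≤ k, ∀ s, |s ^ (k + 2) * χ s| ≤ A * |s| ^ m ∧
      |deriv (fun s => s ^ (k + 2) * χ s) s| ≤ A * |s| ^ m) :
    ∃ t, 1 ≤ t ∧ ∀ m ≤ k, ∀ y, |y ^ (k + 2) * χ (t * y)| ≤ η * |y| ^ m ∧
      |deriv (fun y => y ^ (k + 2) * χ (t * y)) y| ≤ η * |y| ^ m := by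
  obtain ⟨t, ht⟩ : ∃ t, t = max 1 (A / η) := ⟨_, rfl⟩
  have ht1 : 1 ≤ t := ht ▸ le_max_left _ _
  have ht0 : 0 < t := one_pos.trans_le ht1
  have hAt : A ≤ t * η := (div_le_iff₀ hη).1 (ht ▸ le_max_right _ _)
  have hscale : (fun y => y ^ (k + 2) * χ (t * y)) =
      fun y => (t ^ (k + 2))⁻¹ * ((t * y) ^ (k + 2) * χ (t * y)) := by
    ext y
    field_simp
    ring
  have hbound : ∀ m ≤ k, ∀ y, (t ^ (k + 1))⁻¹ * (A * |t * y| ^ m) ≤ η * |y| ^ m := by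
    intro m hm y
    rw [inv_mul_le_iff₀ (by positivity), abs_mul, abs_of_pos ht0, mul_pow]
    calc A * (t ^ m * |y| ^ m) ≤ t * η * (t ^ k * |y| ^ m) := by gcongr
      _ = t ^ (k + 1) * (η * |y| ^ m) := by ring
  refine ⟨t, ht1, fun m hm y => ⟨?_, ?_⟩⟩
  · rw [congrFun hscale y, abs_mul, abs_of_pos (by positivity)]
    refine le_trans ?_ (hbound m hm y)
    gcongr
    · exact one_le_two
    · exact (hA m hm _).1
  · have hcancel : (t ^ (k + 2))⁻¹ * t = (t ^ (k + 1))⁻¹ := by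
      field_simp
      ring
    rw [hscale, deriv_const_mul_field, deriv_comp_mul_left t (fun s => s ^ (k + 2) * χ s),
      smul_eq_mul, ← mul_assoc, hcancel, abs_mul, abs_of_pos (by positivity)]
    refine le_trans ?_ (hbound m hm y)
    gcongr
    exact (hA m hm _).2

lemma exists_cutoff_abs_pow_mul_le (k : ℕ) {η : ℝ} (hη : 0 < η) :
    ∃ c : ℝ → ℝ, ContDiff ℝ ∞ c ∧ (∀ᶠ y in 𝓝 0, c y = 1) ∧ (∀ y, 1 ≤ |y| → c y = 0) ∧
      ∀ m ≤ k, ∀ y, |y ^ (k + 2) * c y| ≤ η * |y| ^ m ∧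
        |deriv (fun y => y ^ (k + 2) * c y) y| ≤ η * |y| ^ m := by
  let χ : ContDiffBump (0 : ℝ) := ⟨1 / 2, 1, by norm_num, by norm_num⟩
  have hχ0 : ∀ s : ℝ, 1 ≤ |s| → χ s = 0 := fun s hs => χ.zero_of_le_dist (by simpa using hs)
  obtain ⟨A, hA⟩ := exists_abs_pow_mul_and_deriv_le χ.contDiff (fun s hs => hχ0 s hs.le) k
  obtain ⟨t, ht1, ht⟩ := exists_dilation_abs_pow_mul_le hη hA
  refine ⟨fun y => χ (t * y), χ.contDiff.comp (contDiff_const.mul contDiff_id), ?_, fun y hy => ?_,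
    ht⟩
  · have hlim : Tendsto (fun y => t * y) (𝓝 0) (𝓝 0) := by
      simpa using (continuous_const_mul t).tendsto 0
    exact hlim.eventually χ.eventuallyEq_one
  · refine hχ0 _ ?_
    rw [abs_mul, abs_of_pos (one_pos.trans_le ht1)]
    exact one_le_mul_of_one_le_of_one_le ht1 hy

end Cutoff

section BorelTerm

/-- The `n`-th coefficient `iⁿ h⁽ⁿ⁾(x) / n!` in the formal expansion of `h (x + i y)` in powers
of `y`. -/
def imTaylorCoeff (h : ℝ → ℂ) (n : ℕ) (x : ℝ) : ℂ :=
  I ^ n / n.factorial * iteratedDeriv n h x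

/-- The `n`-th term of the formal expansion of `h (x + i y)` in powers of `y`, cut off by `c n` to
make the series converge as in Borel's theorem on prescribed Taylor coefficients. -/
def borelTerm (h : ℝ → ℂ) (c : ℕ → ℝ → ℝ) (n : ℕ) (z : ℂ) : ℂ :=
  (z.im ^ n * c n z.im) • imTaylorCoeff h n z.re

variable {h : ℝ → ℂ} {c : ℕ → ℝ → ℝ}

lemma hasDerivAt_imTaylorCoeff (hh : ContDiff ℝ ∞ h) (n : ℕ) (x : ℝ) :
    HasDerivAt (imTaylorCoeff h n) (-I * (n + 1) * imTaylorCoeff h (n + 1) x) x := by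
  have hderiv : HasDerivAt (iteratedDeriv n h) (iteratedDeriv (n + 1) h x) x := by
    rw [iteratedDeriv_succ]
    exact (hh.differentiable_iteratedDeriv n (mod_cast WithTop.coe_lt_top _) x).hasDerivAt
  have hcoeff : -I * (n + 1) * imTaylorCoeff h (n + 1) x =
      I ^ n / n.factorial * iteratedDeriv (n + 1) h x := by
    have hn : (n.factorial : ℂ) ≠ 0 := mod_cast n.factorial_ne_zero
    have hn1 : (n + 1 : ℂ) ≠ 0 := mod_cast n.succ_ne_zero
    simp only [imTaylorCoeff, Nat.factorial_succ, pow_succ]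
    push_cast
    field_simp
    rw [I_sq]
    ring
  rw [hcoeff]
  exact hderiv.const_mul _

lemma contDiff_imTaylorCoeff (hh : ContDiff ℝ ∞ h) (n : ℕ) : ContDiff ℝ ∞ (imTaylorCoeff h n) := by
  have hderiv : ContDiff ℝ ∞ (iteratedDeriv n h) := by
    rw [iteratedDeriv_eq_iterate]
    exact hh.iterate_deriv n
  exact contDiff_const.mul hderiv

lemma exists_norm_imTaylorCoeff_le (hh : ContDiff ℝ ∞ h) (hsupp : HasCompactSupport h) (n : ℕ) :
    ∃ A, ∀ x, ‖imTaylorCoeff h n x‖ ≤ A := by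
  obtain ⟨A, hA⟩ := (hsupp.iteratedFDeriv (𝕜 := ℝ) n).exists_bound_of_continuous
    (hh.continuous_iteratedFDeriv (mod_cast le_top))
  refine ⟨‖(I ^ n / n.factorial : ℂ)‖ * A, fun x => ?_⟩
  rw [imTaylorCoeff, norm_mul, ← norm_iteratedFDeriv_eq_norm_iteratedDeriv]
  gcongr
  exact hA x

lemma imTaylorCoeff_eq_ite_of_eventuallyEq_const {a : ℂ} {x : ℝ} (hx : h =ᶠ[𝓝 x] fun _ => a)
    (n : ℕ) : imTaylorCoeff h n x = if n = 0 then a else 0 := by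
  rw [imTaylorCoeff, hx.iteratedDeriv_eq, iteratedDeriv_const]
  split_ifs with hn <;> simp [hn]

lemma contDiff_borelTerm (hh : ContDiff ℝ ∞ h) (hc : ∀ n, ContDiff ℝ ∞ (c n)) (n : ℕ) :
    ContDiff ℝ 1 (borelTerm h c n) := by
  have hq : ContDiff ℝ ∞ fun z : ℂ => z.im ^ n * c n z.im :=
    (imCLM.contDiff.pow n).mul ((hc n).comp imCLM.contDiff)
  exact (hq.smul ((contDiff_imTaylorCoeff hh n).comp reCLM.contDiff)).of_le (mod_cast le_top)

-- The `∂/∂x` part of one term cancels the `∂/∂y` part of the next.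
lemma dbar_borelTerm_of_eventuallyEq_one (hh : ContDiff ℝ ∞ h) {n : ℕ} {z : ℂ}
    (hc : c n =ᶠ[𝓝 z.im] fun _ => 1) :
    dbar (borelTerm h c n) z =
      I / 2 * (n * z.im ^ (n - 1) * imTaylorCoeff h n z.re) -
        I / 2 * ((n + 1 : ℕ) * z.im ^ n * imTaylorCoeff h (n + 1) z.re) := by
  have hq : HasDerivAt (fun y => y ^ n * c n y) (n * z.im ^ (n - 1)) z.im := by
    refine (hasDerivAt_pow n z.im).congr_of_eventuallyEq ?_
    filter_upwards [hc] with y hy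
    rw [hy, mul_one]
  refine (dbar_im_smul_re hq (hasDerivAt_imTaylorCoeff hh n z.re)).trans ?_
  rw [hc.self_of_nhds]
  push_cast
  ring

lemma dbar_sum_borelTerm_of_eventuallyEq_one (hh : ContDiff ℝ ∞ h) (hc : ∀ n, ContDiff ℝ ∞ (c n))
    {N : ℕ} {z : ℂ} (hc1 : ∀ n ∈ Finset.range N, c n =ᶠ[𝓝 z.im] fun _ => 1) :
    dbar (fun w => ∑ n ∈ Finset.range N, borelTerm h c n w) z =
      -(I / 2 * (N * z.im ^ (N - 1) * imTaylorCoeff h N z.re)) := by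
  rw [dbar_sum fun n _ => (contDiff_borelTerm hh hc n).differentiable one_ne_zero z,
    Finset.sum_congr rfl fun n hn => dbar_borelTerm_of_eventuallyEq_one hh (hc1 n hn)]
  refine (Finset.sum_range_sub'
    (fun n => I / 2 * (n * (z.im : ℂ) ^ (n - 1) * imTaylorCoeff h n z.re)) N).trans ?_
  simp

end BorelTerm

/-- Cutoffs `c n`, supported in `[-r, r]`, which make the series of the terms `borelTerm h c n`
converge in `C¹`, with tails vanishing to high order on the real axis. -/
structure IsBorelCutoff (h : ℝ → ℂ) (r : ℝ) (c : ℕ → ℝ → ℝ) : Prop where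
  contDiff : ∀ n, ContDiff ℝ ∞ (c n)
  eventuallyEq_one : ∀ n, c n =ᶠ[𝓝 0] fun _ => 1
  eq_zero : ∀ n y, r ≤ |y| → c n y = 0
  norm_borelTerm_le : ∀ m n, m + 2 ≤ n → ∀ z, ‖borelTerm h c n z‖ ≤ (1 / 2) ^ n * |z.im| ^ m
  norm_fderiv_borelTerm_le : ∀ m n, m + 2 ≤ n → ∀ z,
    ‖fderiv ℝ (borelTerm h c n) z‖ ≤ (1 / 2) ^ n * |z.im| ^ m

section IsBorelCutoff

variable {h : ℝ → ℂ} {r : ℝ} {c : ℕ → ℝ → ℝ}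

lemma exists_cutoff_norm_smul_imTaylorCoeff_le (hh : ContDiff ℝ ∞ h) (hsupp : HasCompactSupport h)
    (k : ℕ) {ε : ℝ} (hε : 0 < ε) :
    ∃ c : ℝ → ℝ, ContDiff ℝ ∞ c ∧ c =ᶠ[𝓝 0] (fun _ => 1) ∧ (∀ y, 1 ≤ |y| → c y = 0) ∧
      ∀ m ≤ k, ∀ z : ℂ,
        ‖(z.im ^ (k + 2) * c z.im) • imTaylorCoeff h (k + 2) z.re‖ ≤ ε * |z.im| ^ m ∧
        ‖fderiv ℝ (fun w : ℂ => (w.im ^ (k + 2) * c w.im) • imTaylorCoeff h (k + 2) w.re) z‖ ≤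
          ε * |z.im| ^ m := by
  obtain ⟨A, hA⟩ := exists_norm_imTaylorCoeff_le hh hsupp (k + 2)
  obtain ⟨B, hB⟩ := exists_norm_imTaylorCoeff_le hh hsupp (k + 2 + 1)
  have hA0 : 0 ≤ A := (norm_nonneg _).trans (hA 0)
  have hB0 : 0 ≤ B := (norm_nonneg _).trans (hB 0)
  obtain ⟨D, hD⟩ : ∃ D, D = ((k + 2 : ℕ) + 1) * B + A := ⟨_, rfl⟩
  have hD0 : 0 ≤ D := hD ▸ by positivity
  obtain ⟨c, hc, hc1, hc0, hcη⟩ := exists_cutoff_abs_pow_mul_le k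
    (η := ε / (D + 1)) (by positivity)
  have hηD : ∀ y : ℝ, ∀ m, ε / (D + 1) * |y| ^ m * D ≤ ε * |y| ^ m := fun y m => by
    rw [div_mul_eq_mul_div, div_mul_eq_mul_div, div_le_iff₀ (by positivity)]
    gcongr
    exact le_add_of_nonneg_right zero_le_one
  refine ⟨c, hc, hc1, hc0, fun m hm z => ⟨?_, ?_⟩⟩
  · rw [norm_smul, Real.norm_eq_abs]
    refine le_trans ?_ (hηD z.im m)
    gcongr
    · exact (hcη m hm z.im).1
    · exact (hA z.re).trans (hD ▸ le_add_of_nonneg_left (by positivity))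
  · have hq : DifferentiableAt ℝ (fun y => y ^ (k + 2) * c y) z.im :=
      (differentiableAt_pow _).mul (hc.differentiable (by simp) _)
    refine (norm_fderiv_im_smul_re_le hq.hasDerivAt
      (hasDerivAt_imTaylorCoeff hh (k + 2) z.re)).trans (le_trans ?_ (hηD z.im m))
    have hB' : ‖-I * ((k + 2 : ℕ) + 1) * imTaylorCoeff h (k + 2 + 1) z.re‖ ≤
        ((k + 2 : ℕ) + 1) * B := by
      rw [norm_mul, norm_mul, norm_neg, norm_I, one_mul]
      gcongr
      · exact_mod_cast (norm_natCast (k + 2 + 1)).le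
      · exact hB z.re
    have hη := hcη m hm z.im
    grw [hη.1, hη.2, hB', hA z.re, ← mul_add, ← hD]

lemma exists_isBorelCutoff (hh : ContDiff ℝ ∞ h) (hsupp : HasCompactSupport h) (ρ : ℝ) :
    ∃ r c, IsBorelCutoff h r c ∧ ∀ y, |y| ≤ ρ → c 0 y = 1 := by
  let b : ContDiffBump (0 : ℝ) := ⟨|ρ| + 1, |ρ| + 2, by positivity, by linarith⟩
  choose d hd hd1 hd0 hdle using fun k =>
    exists_cutoff_norm_smul_imTaylorCoeff_le hh hsupp k (ε := (1 / 2) ^ (k + 2)) (by positivity)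
  let c : ℕ → ℝ → ℝ
    | 0 | 1 => b
    | k + 2 => d k
  refine ⟨|ρ| + 2, c, ⟨?_, ?_, ?_, ?_, ?_⟩, fun y hy => ?_⟩
  · rintro (_ | _ | k)
    exacts [b.contDiff, b.contDiff, hd k]
  · rintro (_ | _ | k)
    exacts [b.eventuallyEq_one, b.eventuallyEq_one, hd1 k]
  · have hb0 : ∀ y, |ρ| + 2 ≤ |y| → b y = 0 := fun y hy => b.zero_of_le_dist (by simpa using hy)
    rintro (_ | _ | k) y hy
    exacts [hb0 y hy, hb0 y hy, hd0 k y (by linarith [abs_nonneg ρ])]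
  · rintro m (_ | _ | k) hmk z
    exacts [by lia, by lia, (hdle k m (by lia) z).1]
  · rintro m (_ | _ | k) hmk z
    exacts [by lia, by lia, (hdle k m (by lia) z).2]
  · refine b.one_of_mem_closedBall ?_
    rw [mem_closedBall_zero_iff, Real.norm_eq_abs]
    linarith [le_abs_self ρ]

end IsBorelCutoff

/-- The sum of the cut-off formal expansion of `h (x + i y)` in powers of `y`. -/
def borelSum (h : ℝ → ℂ) (c : ℕ → ℝ → ℝ) (z : ℂ) : ℂ :=
  ∑' n, borelTerm h c n z

section BorelSum

variable {h : ℝ → ℂ} {r : ℝ} {c : ℕ → ℝ → ℝ}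

lemma summable_half_pow_add (k : ℕ) : Summable fun n : ℕ => (1 / 2 : ℝ) ^ (n + k) :=
  (summable_nat_add_iff k).2 summable_geometric_two

lemma IsBorelCutoff.summable_borelTerm (hc : IsBorelCutoff h r c) (z : ℂ) :
    Summable fun n => borelTerm h c n z := by
  refine (summable_nat_add_iff 2).1 (.of_norm_bounded (summable_half_pow_add 2) fun n => ?_)
  simpa using hc.norm_borelTerm_le 0 (n + 2) (by lia) z

lemma IsBorelCutoff.borelSum_eq_sum_add_tsum (hc : IsBorelCutoff h r c) (N : ℕ) :
    borelSum h c = fun z => (∑ n ∈ Finset.range N, borelTerm h c n z) +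
      ∑' n, borelTerm h c (n + N) z :=
  funext fun z => ((hc.summable_borelTerm z).sum_add_tsum_nat_add N).symm

lemma IsBorelCutoff.norm_fderiv_borelTerm_add_le (hc : IsBorelCutoff h r c) (N n : ℕ) (z : ℂ) :
    ‖fderiv ℝ (borelTerm h c (n + (N + 2))) z‖ ≤ (1 / 2) ^ (n + (N + 2)) := by
  simpa using hc.norm_fderiv_borelTerm_le 0 (n + (N + 2)) (by lia) z

lemma IsBorelCutoff.contDiff_tsum_borelTerm_add (hh : ContDiff ℝ ∞ h) (hc : IsBorelCutoff h r c)
    (N : ℕ) : ContDiff ℝ 1 fun z => ∑' n, borelTerm h c (n + (N + 2)) z := by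
  refine contDiff_tsum (v := fun _ n => (1 / 2) ^ (n + (N + 2))) (N := 1)
    (fun n => contDiff_borelTerm hh hc.contDiff _) (fun _ _ => summable_half_pow_add _)
    fun k n z hk => ?_
  rcases Nat.le_one_iff_eq_zero_or_eq_one.1 (mod_cast hk : k ≤ 1) with rfl | rfl
  · rw [norm_iteratedFDeriv_zero]
    simpa using hc.norm_borelTerm_le 0 (n + (N + 2)) (by lia) z
  · rw [norm_iteratedFDeriv_one]
    exact hc.norm_fderiv_borelTerm_add_le N n z

lemma IsBorelCutoff.norm_dbar_tsum_borelTerm_add_le (hh : ContDiff ℝ ∞ h)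
    (hc : IsBorelCutoff h r c) (N : ℕ) (z : ℂ) :
    ‖dbar (fun w => ∑' n, borelTerm h c (n + (N + 2)) w) z‖ ≤
      (∑' n : ℕ, (1 / 2 : ℝ) ^ (n + (N + 2))) * |z.im| ^ N := by
  refine (norm_dbar_le _ z).trans ?_
  have hsummable : Summable fun n => borelTerm h c (n + (N + 2)) z :=
    (summable_nat_add_iff (f := fun n => borelTerm h c n z) (N + 2)).2 (hc.summable_borelTerm z)
  have hfderiv : fderiv ℝ (fun w => ∑' n, borelTerm h c (n + (N + 2)) w) z =
      ∑' n, fderiv ℝ (borelTerm h c (n + (N + 2))) z :=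
    fderiv_tsum_apply (summable_half_pow_add (N + 2))
      (fun n => (contDiff_borelTerm hh hc.contDiff _).differentiable one_ne_zero)
      (hc.norm_fderiv_borelTerm_add_le N) hsummable z
  rw [hfderiv]
  have hsum := (summable_half_pow_add (N + 2)).hasSum.mul_right (|z.im| ^ N)
  exact tsum_of_norm_bounded hsum fun n => hc.norm_fderiv_borelTerm_le N (n + (N + 2)) (by lia) z

lemma IsBorelCutoff.borelTerm_eq_zero (hc : IsBorelCutoff h r c) {z : ℂ}
    (hz : z ∉ tsupport h ×ℂ Icc (-r) r) (n : ℕ) : borelTerm h c n z = 0 := by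
  rw [mem_reProdIm, not_and_or] at hz
  rcases hz with hre | him
  · rw [borelTerm, imTaylorCoeff_eq_ite_of_eventuallyEq_const (a := 0)
      (notMem_tsupport_iff_eventuallyEq.1 hre), ite_self, smul_zero]
  · rw [mem_Icc, ← abs_le, not_le] at him
    rw [borelTerm, hc.eq_zero n z.im him.le, mul_zero, zero_smul]

lemma isCompact_tsupport_reProdIm_Icc (hsupp : HasCompactSupport h) (r : ℝ) :
    IsCompact (tsupport h ×ℂ Icc (-r) r) :=
  hsupp.isCompact.reProdIm isCompact_Icc

lemma IsBorelCutoff.hasCompactSupport_borelSum (hsupp : HasCompactSupport h)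
    (hc : IsBorelCutoff h r c) : HasCompactSupport (borelSum h c) :=
  .intro (isCompact_tsupport_reProdIm_Icc hsupp r) fun z hz => by
    simp only [borelSum, hc.borelTerm_eq_zero hz, tsum_zero]

lemma IsBorelCutoff.exists_norm_dbar_sum_borelTerm_le (hh : ContDiff ℝ ∞ h)
    (hsupp : HasCompactSupport h) (hc : IsBorelCutoff h r c) {N M : ℕ} (hNM : N < M) :
    ∃ C, ∀ z, ‖dbar (fun w => ∑ n ∈ Finset.range M, borelTerm h c n w) z‖ ≤ C * |z.im| ^ N := by
  have hbounded : ∃ B, ∀ z,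
      ‖dbar (fun w => ∑ n ∈ Finset.range M, borelTerm h c n w) z‖ ≤ B := by
    refine (hasCompactSupport_dbar ?_).exists_bound_of_continuous (continuous_dbar ?_)
    · exact .intro (isCompact_tsupport_reProdIm_Icc hsupp r) fun z hz =>
        Finset.sum_eq_zero fun n _ => hc.borelTerm_eq_zero hz n
    · exact .sum fun n _ => contDiff_borelTerm hh hc.contDiff n
  have hone : ∀ᶠ y in 𝓝 (0 : ℝ), ∀ n ∈ Finset.range M, c n =ᶠ[𝓝 y] fun _ => 1 :=
    (Finset.eventually_all _).2 fun n _ => (hc.eventuallyEq_one n).eventually_nhds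
  obtain ⟨B, hB⟩ := hbounded
  obtain ⟨δ, hδ, hone⟩ := Metric.eventually_nhds_iff.1 hone
  obtain ⟨A, hA⟩ := exists_norm_imTaylorCoeff_le hh hsupp M
  refine exists_norm_le_mul_abs_im_pow (C := M * A) (Nat.le_sub_one_of_lt hNM) hδ hB fun z hz => ?_
  rw [dbar_sum_borelTerm_of_eventuallyEq_one hh hc.contDiff (hone (by simpa using hz))]
  have hI : ‖(I / 2 : ℂ)‖ ≤ 1 := by norm_num
  rw [norm_neg, norm_mul, norm_mul, norm_mul, norm_pow, norm_real, Real.norm_eq_abs, norm_natCast]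
  grw [hI, hA z.re]
  exact le_of_eq (by ring)

lemma IsBorelCutoff.isAlmostAnalytic_borelSum (hh : ContDiff ℝ ∞ h) (hsupp : HasCompactSupport h)
    (hc : IsBorelCutoff h r c) : IsAlmostAnalytic (borelSum h c) := by
  have hsum : ∀ M, ContDiff ℝ 1 fun z => ∑ n ∈ Finset.range M, borelTerm h c n z :=
    fun M => .sum fun n _ => contDiff_borelTerm hh hc.contDiff n
  refine ⟨?_, fun N => ?_⟩
  · rw [hc.borelSum_eq_sum_add_tsum 2]
    exact (hsum 2).add (hc.contDiff_tsum_borelTerm_add hh 0)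
  · obtain ⟨C, hC⟩ := hc.exists_norm_dbar_sum_borelTerm_le hh hsupp (by lia : N < N + 2)
    refine ⟨C + ∑' n : ℕ, (1 / 2 : ℝ) ^ (n + (N + 2)), fun z => ?_⟩
    rw [hc.borelSum_eq_sum_add_tsum (N + 2), dbar_add ((hsum _).differentiable one_ne_zero z)
      ((hc.contDiff_tsum_borelTerm_add hh N).differentiable one_ne_zero z), add_mul]
    exact norm_add_le_of_le (hC z) (hc.norm_dbar_tsum_borelTerm_add_le hh N z)

lemma borelSum_ofReal (hc : c 0 0 = 1) (x : ℝ) : borelSum h c x = h x := by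
  rw [borelSum, tsum_eq_single 0 fun n hn => by simp [borelTerm, hn]]
  simp [borelTerm, imTaylorCoeff, hc]

lemma borelSum_eq_of_eventuallyEq_const {a z : ℂ} (ha : h =ᶠ[𝓝 z.re] fun _ => a)
    (hc : c 0 z.im = 1) : borelSum h c z = a := by
  simp only [borelSum, borelTerm, imTaylorCoeff_eq_ite_of_eventuallyEq_const ha]
  rw [tsum_eq_single 0 fun n hn => by simp [hn]]
  simp [hc]

theorem exists_isAlmostAnalytic_of_hasCompactSupport (hh : ContDiff ℝ ∞ h)
    (hsupp : HasCompactSupport h) (ρ : ℝ) :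
    ∃ E : ℂ → ℂ, IsAlmostAnalytic E ∧ HasCompactSupport E ∧ (∀ x : ℝ, E x = h x) ∧
      ∀ (a z : ℂ), |z.im| ≤ ρ → h =ᶠ[𝓝 z.re] (fun _ => a) → E z = a := by
  obtain ⟨r, c, hc, hcρ⟩ := exists_isBorelCutoff hh hsupp ρ
  exact ⟨borelSum h c, hc.isAlmostAnalytic_borelSum hh hsupp, hc.hasCompactSupport_borelSum hsupp,
    borelSum_ofReal (hc.eventuallyEq_one 0).self_of_nhds,
    fun a z hz ha => borelSum_eq_of_eventuallyEq_const ha (hcρ _ hz)⟩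

end BorelSum

section CauchyPompeiu

lemma integral_Ioi_fderiv_smul {E F : Type*} [NormedAddCommGroup E] [NormedSpace ℝ E]
    [NormedAddCommGroup F] [NormedSpace ℝ F] [CompleteSpace F] {u : E → F} (hu : ContDiff ℝ 1 u)
    (hsupp : HasCompactSupport u) {v : E} (hv : v ≠ 0) :
    ∫ r in Ioi (0 : ℝ), fderiv ℝ u (r • v) v = -u 0 := by
  have hray : ContDiff ℝ 1 fun r : ℝ => u (r • v) := hu.comp (contDiff_id.smul contDiff_const)
  have hderiv : ∀ r : ℝ, deriv (fun r : ℝ => u (r • v)) r = fderiv ℝ u (r • v) v := fun r => by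
    have hsmul : HasDerivAt (fun r : ℝ => r • v) v r := by
      simpa using (hasDerivAt_id r).smul_const v
    exact ((hu.differentiable one_ne_zero _).hasFDerivAt.comp_hasDerivAt r hsmul).deriv
  simpa only [hderiv, zero_smul] using
    (hsupp.comp_isClosedEmbedding (isClosedEmbedding_smul_left hv)).integral_Ioi_deriv_eq hray 0

variable {u : ℂ → ℂ}

lemma integral_fderiv_mul_exp_I (hu : ContDiff ℝ 1 u) {r : ℝ} (hr : r ≠ 0) :
    ∫ θ in Ioo (-Real.pi) Real.pi, fderiv ℝ u (r * exp (θ * I)) (I * exp (θ * I)) = 0 := by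
  have hderiv : ∀ θ : ℝ, HasDerivAt (fun θ => u (circleMap 0 r θ))
      (r • fderiv ℝ u (r * exp (θ * I)) (I * exp (θ * I))) θ := fun θ => by
    have htangent : r • (I * exp (θ * I)) = circleMap 0 r θ * I := by
      rw [circleMap_zero, real_smul]
      ring
    rw [← map_smul, htangent, ← circleMap_zero]
    exact (hu.differentiable one_ne_zero _).hasFDerivAt.comp_hasDerivAt θ
      (hasDerivAt_circleMap 0 r θ)
  have hcont : Continuous fun θ : ℝ => r • fderiv ℝ u (r * exp (θ * I)) (I * exp (θ * I)) := by
    have := hu.continuous_fderiv one_ne_zero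
    fun_prop
  have hFTC := intervalIntegral.integral_eq_sub_of_hasDerivAt (fun θ _ => hderiv θ)
    (hcont.intervalIntegrable (-Real.pi) Real.pi)
  have hperiod : circleMap 0 r (-Real.pi) = circleMap 0 r Real.pi := by
    rw [← periodic_circleMap 0 r (-Real.pi)]
    ring_nf
  rw [hperiod, sub_self, intervalIntegral.integral_of_le (by linarith [Real.pi_pos]),
    integral_Ioc_eq_integral_Ioo, integral_smul] at hFTC
  exact (smul_eq_zero.1 hFTC).resolve_left hr

lemma integrableOn_Ioi_prod_Ioo_of_eq_zero {G : ℝ × ℝ → ℂ} (hG : Continuous G) {a b c R : ℝ}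
    (hG0 : ∀ p, R < p.1 → G p = 0) : IntegrableOn G (Ioi a ×ˢ Ioo b c) := by
  have hcompact : IntegrableOn G (Icc a R ×ˢ Icc b c) :=
    hG.continuousOn.integrableOn_compact (isCompact_Icc.prod isCompact_Icc)
  refine hcompact.of_forall_sdiff_eq_zero (measurableSet_Ioi.prod measurableSet_Ioo) ?_
  rintro p ⟨⟨hp1, hp2⟩, hp⟩
  refine hG0 p (not_le.1 fun hR => hp ⟨⟨?_, hR⟩, Ioo_subset_Icc_self hp2⟩)
  exact (mem_Ioi.1 hp1).le

lemma integrableOn_fderiv_polar (hu : ContDiff ℝ 1 u) (hsupp : HasCompactSupport u)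
    {v : ℝ → ℂ} (hv : Continuous v) :
    IntegrableOn (fun p : ℝ × ℝ => fderiv ℝ u (p.1 * exp (p.2 * I)) (v p.2))
      (Ioi 0 ×ˢ Ioo (-Real.pi) Real.pi) := by
  obtain ⟨R, hR⟩ := hsupp.isCompact.isBounded.exists_norm_le
  refine integrableOn_Ioi_prod_Ioo_of_eq_zero (R := R) ?_ fun p hp => ?_
  · have := hu.continuous_fderiv one_ne_zero
    fun_prop
  · have hnorm : ‖(p.1 * exp (p.2 * I) : ℂ)‖ = |p.1| := by
      rw [norm_mul, norm_exp_ofReal_mul_I, mul_one, norm_real, Real.norm_eq_abs]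
    have hnotMem : (p.1 * exp (p.2 * I) : ℂ) ∉ tsupport u := fun hmem =>
      (hR _ hmem).not_gt (hnorm ▸ hp.trans_le (le_abs_self _))
    rw [fderiv_of_notMem_tsupport ℝ hnotMem, zero_apply]

lemma integral_polar_fderiv_radial (hu : ContDiff ℝ 1 u) (hsupp : HasCompactSupport u) :
    ∫ p in Ioi (0 : ℝ) ×ˢ Ioo (-Real.pi) Real.pi,
      fderiv ℝ u (p.1 * exp (p.2 * I)) (exp (p.2 * I)) = -(2 * Real.pi * u 0) := by
  have hint := integrableOn_fderiv_polar hu hsupp (v := fun θ => exp (θ * I)) (by fun_prop)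
  rw [IntegrableOn, Measure.volume_eq_prod, ← Measure.prod_restrict] at hint
  rw [Measure.volume_eq_prod, ← Measure.prod_restrict, integral_prod_symm _ hint]
  have hray : ∀ θ : ℝ, ∫ r in Ioi (0 : ℝ), fderiv ℝ u (r * exp (θ * I)) (exp (θ * I)) = -u 0 :=
    fun θ => integral_Ioi_fderiv_smul hu hsupp (exp_ne_zero (θ * I))
  simp only [hray, setIntegral_const, Real.volume_real_Ioo_of_le
    (by linarith [Real.pi_pos] : -Real.pi ≤ Real.pi), real_smul]
  push_cast
  ring

lemma integral_polar_fderiv_angular (hu : ContDiff ℝ 1 u) (hsupp : HasCompactSupport u) :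
    ∫ p in Ioi (0 : ℝ) ×ˢ Ioo (-Real.pi) Real.pi,
      fderiv ℝ u (p.1 * exp (p.2 * I)) (I * exp (p.2 * I)) = 0 := by
  have hint := integrableOn_fderiv_polar hu hsupp (v := fun θ => I * exp (θ * I)) (by fun_prop)
  rw [Measure.volume_eq_prod, setIntegral_prod _ hint]
  exact setIntegral_eq_zero_of_forall_eq_zero fun r hr =>
    integral_fderiv_mul_exp_I hu (mem_Ioi.1 hr).ne'

lemma mul_dbar_div_polar {r : ℝ} (hr : r ≠ 0) (u : ℂ → ℂ) (θ : ℝ) :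
    r * (dbar u (r * exp (θ * I)) / (r * exp (θ * I))) =
      (fderiv ℝ u (r * exp (θ * I)) (exp (θ * I)) +
        I * fderiv ℝ u (r * exp (θ * I)) (I * exp (θ * I))) / 2 := by
  have hconj : conj (exp (θ * I)) = (exp (θ * I))⁻¹ := by
    rw [← exp_conj, map_mul, conj_ofReal, conj_I, mul_neg, exp_neg]
  have hr' : (r : ℂ) ≠ 0 := ofReal_ne_zero.2 hr
  rw [fderiv_add_I_mul_fderiv_I_mul, hconj]
  field_simp

lemma integral_dbar_div (hu : ContDiff ℝ 1 u) (hsupp : HasCompactSupport u) :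
    ∫ w, dbar u w / w = -(Real.pi * u 0) := by
  have hradial := integrableOn_fderiv_polar hu hsupp (v := fun θ => exp (θ * I)) (by fun_prop)
  have hangular := integrableOn_fderiv_polar hu hsupp (v := fun θ => I * exp (θ * I))
    (by fun_prop)
  have hpolar : ∀ p ∈ Ioi (0 : ℝ) ×ˢ Ioo (-Real.pi) Real.pi,
      p.1 • (dbar u (Complex.polarCoord.symm p) / Complex.polarCoord.symm p) =
        (fderiv ℝ u (p.1 * exp (p.2 * I)) (exp (p.2 * I)) +
          I * fderiv ℝ u (p.1 * exp (p.2 * I)) (I * exp (p.2 * I))) / 2 := fun p hp => by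
    rw [Complex.polarCoord_symm_apply, ofReal_cos, ofReal_sin, ← exp_mul_I, real_smul]
    exact mul_dbar_div_polar (mem_Ioi.1 hp.1).ne' u p.2
  rw [← Complex.integral_comp_polarCoord_symm, polarCoord_target,
    setIntegral_congr_fun (measurableSet_Ioi.prod measurableSet_Ioo) hpolar, integral_div,
    integral_add hradial (hangular.const_mul I), integral_const_mul,
    integral_polar_fderiv_radial hu hsupp, integral_polar_fderiv_angular hu hsupp]
  ring

theorem integral_dbar_div_sub (hu : ContDiff ℝ 1 u) (hsupp : HasCompactSupport u) (a : ℂ) :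
    ∫ w, dbar u w / (w - a) = -(Real.pi * u a) := by
  have htranslate := integral_dbar_div (u := fun w => u (w + a)) (hu.comp (by fun_prop))
    (hsupp.comp_homeomorph (Homeomorph.addRight a))
  rw [zero_add] at htranslate
  rw [← htranslate, ← integral_add_right_eq_self _ a]
  simp only [dbar_comp_add_right, add_sub_cancel_right]

end CauchyPompeiu

section CauchyIntegral

variable {v : ℂ → ℂ} {S : Set ℝ}

lemma norm_div_sub_pow_le_indicator {C : ℝ} {n : ℕ} {a : ℂ} (hC : 0 ≤ C)
    (hflat : ∀ w, ‖v w‖ ≤ C * ‖w - a‖ ^ n) (w : ℂ) :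
    ‖v w / (w - a) ^ n‖ ≤ (tsupport v).indicator (fun _ => C) w := by
  by_cases hw : w ∈ tsupport v
  · rw [indicator_of_mem hw, norm_div, norm_pow]
    exact div_le_of_le_mul₀ (by positivity) hC (hflat w)
  · rw [indicator_of_notMem hw, image_eq_zero_of_notMem_tsupport hw, zero_div, norm_zero]

lemma integrable_indicator_tsupport_const (hsupp : HasCompactSupport v) (C : ℝ) :
    Integrable ((tsupport v).indicator fun _ => C) :=
  (integrable_indicator_iff (isClosed_tsupport v).measurableSet).2
    (integrableOn_const hsupp.isCompact.measure_ne_top)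

lemma aestronglyMeasurable_div_sub_pow (hv : Continuous v) (n : ℕ) (a : ℂ) :
    AEStronglyMeasurable fun w => v w / (w - a) ^ n :=
  (hv.measurable.div (by fun_prop)).aestronglyMeasurable

lemma hasDerivAt_div_sub_ofReal_pow {a w : ℂ} {x : ℝ} (n : ℕ) (ha : w = x → a = 0) :
    HasDerivAt (fun y : ℝ => a / (w - y) ^ n) (n * (a / (w - x) ^ (n + 1))) x := by
  rcases eq_or_ne w x with hw | hw
  · simpa only [ha hw, zero_div, mul_zero] using hasDerivAt_const x (0 : ℂ)
  · have hwx : w - x ≠ 0 := sub_ne_zero.2 hw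
    have hsub : HasDerivAt (fun y : ℝ => w - (y : ℂ)) (-1) x :=
      (hasDerivAt_id x).ofReal_comp.const_sub w
    refine ((hasDerivAt_const x a).fun_div (hsub.fun_pow n) (pow_ne_zero n hwx)).congr_deriv ?_
    rcases n with _ | n
    · simp
    · rw [Nat.add_sub_cancel]
      field_simp
      ring

lemma hasDerivAt_integral_div_sub_pow (hv : Continuous v) (hsupp : HasCompactSupport v)
    (hS : IsOpen S) (hflat : ∀ N : ℕ, ∃ C, ∀ x ∈ S, ∀ w, ‖v w‖ ≤ C * ‖w - (x : ℂ)‖ ^ N) (n : ℕ)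
    {x : ℝ} (hx : x ∈ S) :
    HasDerivAt (fun y : ℝ => ∫ w, v w / (w - y) ^ n) (n * ∫ w, v w / (w - x) ^ (n + 1)) x := by
  have hbound : ∀ k, ∃ C, ∀ y ∈ S, ∀ w,
      ‖v w / (w - y) ^ k‖ ≤ (tsupport v).indicator (fun _ => C) w := fun k => by
    obtain ⟨C, hC⟩ := hflat k
    refine ⟨|C|, fun y hy => norm_div_sub_pow_le_indicator (abs_nonneg C)
      fun w => (hC y hy w).trans ?_⟩
    gcongr
    exact le_abs_self C
  have hzero : ∀ y ∈ S, v y = 0 := fun y hy => by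
    obtain ⟨C, hC⟩ := hflat 1
    simpa using hC y hy y
  obtain ⟨C, hC⟩ := hbound n
  obtain ⟨D, hD⟩ := hbound (n + 1)
  rw [← integral_const_mul]
  refine (hasDerivAt_integral_of_dominated_loc_of_deriv_le
    (bound := fun w => n * (tsupport v).indicator (fun _ => D) w)
    (F' := fun y w => n * (v w / (w - y) ^ (n + 1))) (hS.mem_nhds hx)
    (.of_forall fun y => aestronglyMeasurable_div_sub_pow hv n y) ?_
    ((aestronglyMeasurable_div_sub_pow hv (n + 1) x).const_mul _)
    (.of_forall fun w y hy => ?_)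
    ((integrable_indicator_tsupport_const hsupp D).const_mul _) (.of_forall fun w y hy => ?_)).2
  · exact (integrable_indicator_tsupport_const hsupp C).mono'
      (aestronglyMeasurable_div_sub_pow hv n x) (.of_forall (hC x hx))
  · rw [norm_mul, norm_natCast]
    gcongr
    exact hD y hy w
  · exact hasDerivAt_div_sub_ofReal_pow n fun hw => hw ▸ hzero y hy

lemma contDiffOn_integral_div_sub_pow (hv : Continuous v) (hsupp : HasCompactSupport v)
    (hS : IsOpen S) (hflat : ∀ N : ℕ, ∃ C, ∀ x ∈ S, ∀ w, ‖v w‖ ≤ C * ‖w - (x : ℂ)‖ ^ N) (n : ℕ) :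
    ContDiffOn ℝ ∞ (fun x : ℝ => ∫ w, v w / (w - x) ^ n) S := by
  refine contDiffOn_infty.2 fun k => ?_
  have hderiv n {x : ℝ} (hx : x ∈ S) := hasDerivAt_integral_div_sub_pow hv hsupp hS hflat n hx
  induction k generalizing n with
  | zero => exact contDiffOn_zero.2 fun x hx => (hderiv n hx).continuousAt.continuousWithinAt
  | succ k ih =>
    refine (contDiffOn_succ_iff_deriv_of_isOpen hS).2
      ⟨fun x hx => (hderiv n hx).differentiableAt.differentiableWithinAt,
        fun hω => (WithTop.natCast_ne_top k hω).elim, ?_⟩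
    exact (contDiffOn_const.mul (ih (n + 1))).congr fun x hx => (hderiv n hx).deriv

lemma contDiffOn_ofReal_of_dbar_flat {u : ℂ → ℂ} (hu : ContDiff ℝ 1 u) (hsupp : HasCompactSupport u)
    (hS : IsOpen S)
    (hflat : ∀ N : ℕ, ∃ C, ∀ x ∈ S, ∀ w, ‖dbar u w‖ ≤ C * ‖w - (x : ℂ)‖ ^ N) :
    ContDiffOn ℝ ∞ (fun x : ℝ => u x) S := by
  have hsmooth := contDiffOn_integral_div_sub_pow (continuous_dbar hu)
    (hasCompactSupport_dbar hsupp) hS hflat 1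
  refine (contDiffOn_const (c := -(Real.pi : ℂ)⁻¹)).mul hsmooth |>.congr fun x _ => ?_
  have hpi : (Real.pi : ℂ) ≠ 0 := ofReal_ne_zero.2 Real.pi_ne_zero
  simp only [pow_one, integral_dbar_div_sub hu hsupp]
  field_simp

end CauchyIntegral

lemma IsAlmostAnalytic.exists_norm_dbar_le_mul_norm_sub_pow {F u : ℂ → ℂ} (hF : IsAlmostAnalytic F)
    (hu : ContDiff ℝ 1 u) (hsupp : HasCompactSupport u) {x₀ : ℝ}
    (huF : ∀ w ∈ Metric.ball (x₀ : ℂ) 2, u =ᶠ[𝓝 w] F) (N : ℕ) :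
    ∃ C, ∀ x ∈ Metric.ball x₀ 1, ∀ w, ‖dbar u w‖ ≤ C * ‖w - (x : ℂ)‖ ^ N := by
  obtain ⟨C, hC⟩ := hF.flat_dbar N
  obtain ⟨B, hB⟩ := (hasCompactSupport_dbar hsupp).exists_bound_of_continuous (continuous_dbar hu)
  have hB0 : 0 ≤ B := (norm_nonneg _).trans (hB 0)
  refine ⟨|C| + B, fun x hx w => ?_⟩
  rw [add_mul]
  by_cases hw : w ∈ Metric.ball (x₀ : ℂ) 2
  · have him : |w.im| ≤ ‖w - (x : ℂ)‖ := by simpa using abs_im_le_norm (w - x)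
    calc ‖dbar u w‖ = ‖dbar F w‖ := by rw [dbar_congr (huF w hw)]
      _ ≤ |C| * |w.im| ^ N := (hC w).trans (by gcongr; exact le_abs_self C)
      _ ≤ |C| * ‖w - (x : ℂ)‖ ^ N := by gcongr
      _ ≤ _ := le_add_of_nonneg_right (by positivity)
  · have hfar : 1 ≤ ‖w - (x : ℂ)‖ := by
      have hx' : dist (x : ℂ) x₀ < 1 := by
        rw [isometry_ofReal.dist_eq]
        exact hx
      have hw' : 2 ≤ dist w x₀ := not_lt.1 hw
      rw [← dist_eq_norm]
      linarith [dist_triangle w x x₀]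
    calc ‖dbar u w‖ ≤ B * 1 := (hB w).trans_eq (mul_one B).symm
      _ ≤ B * ‖w - (x : ℂ)‖ ^ N := by gcongr; exact one_le_pow₀ hfar
      _ ≤ _ := le_add_of_nonneg_left (by positivity)

theorem IsAlmostAnalytic.contDiff_ofReal {F : ℂ → ℂ} (hF : IsAlmostAnalytic F) :
    ContDiff ℝ ∞ fun x : ℝ => F x := by
  refine contDiff_iff_contDiffAt.2 fun x₀ => ?_
  let χ : ContDiffBump (x₀ : ℂ) := ⟨2, 3, by norm_num, by norm_num⟩
  have hu : ContDiff ℝ 1 fun w => χ w • F w := χ.contDiff.smul hF.contDiff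
  have huF : ∀ w ∈ Metric.ball (x₀ : ℂ) 2, (fun w => χ w • F w) =ᶠ[𝓝 w] F := fun w hw => by
    filter_upwards [χ.eventuallyEq_one_of_mem_ball hw] with y hy
    rw [hy, Pi.one_apply, one_smul]
  have hsupp : HasCompactSupport fun w => χ w • F w := χ.hasCompactSupport.smul_right
  have hsmooth := contDiffOn_ofReal_of_dbar_flat hu hsupp Metric.isOpen_ball
    (hF.exists_norm_dbar_le_mul_norm_sub_pow hu hsupp huF)
  refine (hsmooth.congr fun x hx => ?_).contDiffAt (Metric.ball_mem_nhds x₀ one_pos)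
  have hx' : (x : ℂ) ∈ Metric.ball (x₀ : ℂ) 2 := by
    rw [Metric.mem_ball, isometry_ofReal.dist_eq]
    exact (Metric.mem_ball.1 hx).trans one_lt_two
  exact (huF x hx').self_of_nhds.symm

lemma exists_isAlmostAnalytic_cutoff (R : ℝ) :
    ∃ φ : ℂ → ℂ, IsAlmostAnalytic φ ∧ HasCompactSupport φ ∧
      ∀ z, ‖z‖ ≤ R → φ =ᶠ[𝓝 z] fun _ => 1 := by
  let b : ContDiffBump (0 : ℝ) := ⟨|R| + 1, |R| + 2, by positivity, by linarith⟩
  have hb : ContDiff ℝ ∞ fun x => (b x : ℂ) := ofRealCLM.contDiff.comp b.contDiff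
  have hbsupp : HasCompactSupport fun x => (b x : ℂ) := b.hasCompactSupport.comp_left ofReal_zero
  obtain ⟨φ, hφ, hφsupp, -, hφ1⟩ := exists_isAlmostAnalytic_of_hasCompactSupport hb hbsupp (|R| + 1)
  refine ⟨φ, hφ, hφsupp, fun z hz => ?_⟩
  have hmem : z ∈ Metric.ball (0 : ℂ) (|R| + 1) := by
    rw [mem_ball_zero_iff]
    linarith [le_abs_self R]
  filter_upwards [Metric.isOpen_ball.mem_nhds hmem] with w hw
  rw [mem_ball_zero_iff] at hw
  refine hφ1 1 w ((abs_im_le_norm w).trans hw.le) ?_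
  have hre : w.re ∈ Metric.ball (0 : ℝ) (|R| + 1) := by
    rw [mem_ball_zero_iff, Real.norm_eq_abs]
    exact (abs_re_le_norm w).trans_lt hw
  filter_upwards [b.eventuallyEq_one_of_mem_ball hre] with x hx
  rw [hx, Pi.one_apply, ofReal_one]

theorem MemG.exists_isAlmostAnalytic_extension {f : ℝ → ℂ} (hf : MemG f) :
    ∃ F : ℂ → ℂ, IsAlmostAnalytic F ∧ (∃ M, ∀ z, ‖F z‖ ≤ M) ∧ (∀ x : ℝ, F x = f x) ∧
      HasCompactSupport (dbar F) := by
  obtain ⟨hfsmooth, R, -, g, hg, ⟨M, hM⟩, hgf⟩ := hf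
  have hU : IsOpen {z : ℂ | R < ‖z‖} := isOpen_lt continuous_const continuous_norm
  obtain ⟨φ, hφ, hφsupp, hφ1⟩ := exists_isAlmostAnalytic_cutoff R
  have hφ1' : ∀ z ∉ {z : ℂ | R < ‖z‖}, φ =ᶠ[𝓝 z] fun _ => 1 := fun z hz => hφ1 z (not_lt.1 hz)
  obtain ⟨E, hE, hEsupp, hEf, -⟩ := exists_isAlmostAnalytic_of_hasCompactSupport
    (hφ.contDiff_ofReal.mul hfsmooth)
    (hφsupp.comp_isClosedEmbedding isometry_ofReal.isClosedEmbedding).mul_right 0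
  have hG := hφ.one_sub_mul hU hφ1' hg hM
  refine ⟨fun z => (1 - φ z) * g z + E z, hG.add hE, ?_, fun x => ?_, ?_⟩
  · obtain ⟨B, hB⟩ := hφsupp.exists_bound_of_continuous hφ.contDiff.continuous
    obtain ⟨D, hD⟩ := hEsupp.exists_bound_of_continuous hE.contDiff.continuous
    obtain ⟨C, hC⟩ := exists_norm_one_sub_mul_le hB (fun z hz => (hφ1' z hz).self_of_nhds) hM
    exact ⟨C + D, fun z => norm_add_le_of_le (hC z) (hD z)⟩
  · simp only [hEf]
    rcases lt_or_ge R |x| with hx | hx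
    · rw [hgf x hx]
      ring
    · rw [(hφ1 x (by simpa using hx)).self_of_nhds]
      ring
  · have hdbar : dbar (fun z => (1 - φ z) * g z + E z) = fun z => -dbar φ z * g z + dbar E z :=
      funext fun z => by
        rw [dbar_add (hG.differentiable z) (hE.differentiable z),
          dbar_one_sub_mul hU hφ.differentiable hφ1' hg]
    rw [hdbar]
    exact (hasCompactSupport_dbar hφsupp).neg.mul_right.add (hasCompactSupport_dbar hEsupp)

theorem IsAlmostAnalytic.memG {F : ℂ → ℂ} {f : ℝ → ℂ} {M : ℝ} (hF : IsAlmostAnalytic F)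
    (hM : ∀ z, ‖F z‖ ≤ M) (hFf : ∀ x : ℝ, F x = f x) (hsupp : HasCompactSupport (dbar F)) :
    MemG f := by
  obtain ⟨R, hR, hRsupp⟩ := hsupp.isCompact.isBounded.exists_pos_norm_le
  refine ⟨funext hFf ▸ hF.contDiff_ofReal, R, hR, F, fun z hz => ?_, ⟨M, fun z _ => hM z⟩,
    fun x _ => hFf x⟩
  have hdbar : dbar F z = 0 :=
    image_eq_zero_of_notMem_tsupport fun hmem => (hRsupp z hmem).not_gt hz
  exact (differentiableAt_complex_iff_dbar_eq_zero.2
    ⟨hF.differentiable z, hdbar⟩).differentiableWithinAt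

/-- Proposition 10.2: a continuous function `f` on `ℝ` belongs to `𝓖` iff it has a
bounded `C¹` extension `F` to `ℂ` such that `∂F/∂z̄` has compact support and
`∂F/∂z̄ = O(|Im z|^N)` for every `N`. -/
theorem memG_iff_extension (f : ℝ → ℂ) (hf : Continuous f) :
    MemG f ↔ ∃ F : ℂ → ℂ,
      ContDiff ℝ 1 F ∧ (∃ M : ℝ, ∀ z : ℂ, ‖F z‖ ≤ M) ∧ (∀ x : ℝ, F x = f x) ∧
      HasCompactSupport (fun z : ℂ => dbar F z) ∧
      ∀ N : ℕ, ∃ C : ℝ, ∀ z : ℂ, ‖dbar F z‖ ≤ C * |z.im| ^ N := by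
  constructor
  · intro hmem
    obtain ⟨F, hF, hbounded, hFf, hsupp⟩ := hmem.exists_isAlmostAnalytic_extension
    exact ⟨F, hF.contDiff, hbounded, hFf, hsupp, hF.flat_dbar⟩
  · rintro ⟨F, hF, ⟨M, hM⟩, hFf, hsupp, hflat⟩
    exact IsAlmostAnalytic.memG ⟨hF, hflat⟩ hM hFf hsupp
end
end

section
/- Let f̃ : ℂ → ℂ be bounded and continuously differentiable with: (i) for every N ∈ ℕ there is C_N such that |∂f̃/∂z̄(z)| ≤ C_N·(|Im z|/⟨z⟩²)^N for all z ∈ ℂ, and (ii) the total (real) derivative of f̃ satisfies ‖Df̃(z)‖ ≤ C·⟨z⟩^{−2}. Let f = f̃|_ℝ and let K be the closure of f(ℝ) in ℂ. Let g̃ : ℂ → ℂ be bounded, Lipschitz and continuously differentiable, satisfying: for every N ∈ ℕ there is C_N with |∂g̃/∂ζ̄(ζ)| ≤ C_N·dist(ζ, K)^N for all ζ ∈ ℂ. Then h̃ := g̃ ∘ f̃ is a bounded extension of g̃∘f, satisfies ‖Dh̃(z)‖ ≤ C'·⟨z⟩^{−2}, and for every N ∈ ℕ there is C'_N with |∂h̃/∂z̄(z)|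 ≤ C'_N·(|Im z|/⟨z⟩²)^N for all z ∈ ℂ. -/
open MeasureTheory Complex

noncomputable section

/-- The Japanese bracket `⟨z⟩ = (1 + |z|²)^{1/2}`. -/
def jap (z : ℂ) : ℝ := Real.sqrt (1 + ‖z‖ ^ 2)

/-!
By the chain rule `∂(g̃ ∘ f̃)/∂z̄` is a sum of two terms, one controlled by `∂f̃/∂z̄` and the other
by `∂g̃/∂ζ̄` at `f̃ z`. The latter is `O(dist(f̃ z, K) ^ N)`, so it suffices that
`dist(f̃ z, K) = O(|Im z| / ⟨z⟩²)`. This comes from the mean value inequality along a segment from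
`z` to the real axis; on the vertical segment `⟨·⟩` may become much smaller than `⟨z⟩`, so the
endpoint is taken to be `±|z|` instead, with the sign of `Re z`. Since `⟨·⟩⁻²` is integrable along
rays, `f̃` is bounded, so `g̃` and its derivative are bounded on its range by compactness.
-/

open ComplexConjugate

lemma jap_sq (z : ℂ) : jap z ^ 2 = 1 + ‖z‖ ^ 2 :=
  Real.sq_sqrt (by positivity)

lemma one_le_jap_sq (z : ℂ) : 1 ≤ jap z ^ 2 := by
  rw [jap_sq]
  exact le_add_of_nonneg_right (sq_nonneg _)

lemma jap_sq_pos (z : ℂ) : 0 < jap z ^ 2 :=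
  one_pos.trans_le (one_le_jap_sq z)

lemma map_add_I_mul_map_I_mul (A : ℂ →ₗ[ℝ] ℂ) (v : ℂ) :
    A v + I * A (I * v) = conj v * (A 1 + I * A I) := by
  have map_eq (w : ℂ) : A w = w.re * A 1 + w.im * A I := by
    have hw : w = w.re • (1 : ℂ) + w.im • I := by simp
    conv_lhs => rw [hw, map_add, map_smul, map_smul, real_smul, real_smul]
  have hconj : conj v = v.re - v.im * I := by
    simp [Complex.ext_iff]
  rw [map_eq v, map_eq (I * v), hconj, I_mul_re, I_mul_im]
  push_cast
  linear_combination (v.im * A I) * I_sq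

section ChainRule

variable {F G : ℂ → ℂ} {z : ℂ}

lemma dbar_comp (hG : DifferentiableAt ℝ G (F z)) (hF : DifferentiableAt ℝ F z) :
    dbar (G ∘ F) z =
      conj (fderiv ℝ F z 1) * dbar G (F z) - I * fderiv ℝ G (F z) (I * dbar F z) := by
  have fderiv_I : fderiv ℝ F z I = I * fderiv ℝ F z 1 - (2 : ℝ) • (I * dbar F z) := by
    rw [dbar, real_smul]
    push_cast
    linear_combination fderiv ℝ F z I * I_sq
  have antilinear := map_add_I_mul_map_I_mul (fderiv ℝ G (F z)).toLinearMap (fderiv ℝ F z 1)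
  simp only [ContinuousLinearMap.coe_coe] at antilinear
  rw [dbar, dbar.eq_1 G, fderiv_comp z hG hF, ContinuousLinearMap.comp_apply,
    ContinuousLinearMap.comp_apply, fderiv_I, map_sub, map_smul, real_smul]
  push_cast
  linear_combination antilinear / 2

lemma norm_dbar_comp_le (hG : DifferentiableAt ℝ G (F z)) (hF : DifferentiableAt ℝ F z) :
    ‖dbar (G ∘ F) z‖ ≤
      ‖fderiv ℝ F z‖ * ‖dbar G (F z)‖ + ‖fderiv ℝ G (F z)‖ * ‖dbar F z‖ := by
  rw [dbar_comp hG hF]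
  calc
    _ ≤ ‖fderiv ℝ F z 1‖ * ‖dbar G (F z)‖ + ‖fderiv ℝ G (F z) (I * dbar F z)‖ :=
      (norm_sub_le _ _).trans_eq (by simp)
    _ ≤ _ := by
      gcongr
      · simpa using (fderiv ℝ F z).le_opNorm 1
      · simpa using (fderiv ℝ G (F z)).le_opNorm (I * dbar F z)

end ChainRule

lemma norm_sq_le_two_mul_norm_sq_of_mem_segment {E : Type*} [NormedAddCommGroup E]
    [InnerProductSpace ℝ E] {x y w : E} (hxy : ‖x‖ ≤ ‖y‖) (hinner : 0 ≤ inner ℝ x y)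
    (hw : w ∈ segment ℝ x y) : ‖x‖ ^ 2 ≤ 2 * ‖w‖ ^ 2 := by
  obtain ⟨a, b, ha, hb, hab, rfl⟩ := hw
  have hexpand : ‖a • x + b • y‖ ^ 2 =
      a ^ 2 * ‖x‖ ^ 2 + 2 * (a * b * inner ℝ x y) + b ^ 2 * ‖y‖ ^ 2 := by
    rw [norm_add_sq_real, norm_smul, norm_smul, real_inner_smul_left, real_inner_smul_right,
      mul_pow, mul_pow, Real.norm_eq_abs, Real.norm_eq_abs, sq_abs, sq_abs]
    ring
  have hsq : 1 ≤ 2 * (a ^ 2 + b ^ 2) := by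
    simpa [hab] using add_sq_le (a := a) (b := b)
  calc
    ‖x‖ ^ 2 ≤ 2 * (a ^ 2 + b ^ 2) * ‖x‖ ^ 2 := le_mul_of_one_le_left (sq_nonneg _) hsq
    _ = 2 * (a ^ 2 * ‖x‖ ^ 2 + 0 + b ^ 2 * ‖x‖ ^ 2) := by ring
    _ ≤ 2 * (a ^ 2 * ‖x‖ ^ 2 + 2 * (a * b * inner ℝ x y) + b ^ 2 * ‖y‖ ^ 2) := by
      gcongr
      positivity
    _ = 2 * ‖a • x + b • y‖ ^ 2 := by rw [hexpand]

lemma exists_real_norm_eq_and_inner_nonneg_and_norm_sub_le (z : ℂ) :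
    ∃ r : ℝ, ‖z‖ = ‖(r : ℂ)‖ ∧ 0 ≤ inner ℝ z (r : ℂ) ∧ ‖z - r‖ ≤ 2 * |z.im| := by
  obtain ⟨r, hr, hre, hsub⟩ : ∃ r : ℝ, |r| = ‖z‖ ∧ 0 ≤ r * z.re ∧ |z.re - r| = ‖z‖ - |z.re| := by
    have hz := abs_re_le_norm z
    rcases le_total 0 z.re with hpos | hneg
    · refine ⟨‖z‖, abs_norm z, by positivity, ?_⟩
      rw [abs_sub_comm, abs_of_nonneg hpos, abs_of_nonneg (sub_nonneg.2 ((le_abs_self _).trans hz))]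
    · refine ⟨-‖z‖, by rw [abs_neg, abs_norm], by nlinarith [norm_nonneg z], ?_⟩
      rw [abs_of_nonpos hneg] at hz ⊢
      rw [sub_neg_eq_add, abs_of_nonneg (by linarith)]
      ring
  refine ⟨r, by rw [norm_real, Real.norm_eq_abs, hr], by simpa [Complex.inner] using hre, ?_⟩
  calc
    ‖z - r‖ ≤ |z.re - r| + |z.im| := by simpa using norm_le_abs_re_add_abs_im (z - r)
    _ ≤ 2 * |z.im| := by linarith [norm_le_abs_re_add_abs_im z]

section Decay

variable {E : Type*} [NormedAddCommGroup E] [NormedSpace ℝ E] {F : ℂ → E} {C : ℝ}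

lemma infDist_closure_range_ofReal_le (hF : Differentiable ℝ F)
    (hFD : ∀ z, ‖fderiv ℝ F z‖ ≤ C / jap z ^ 2) (z : ℂ) :
    Metric.infDist (F z) (closure (Set.range fun x : ℝ => F x)) ≤
      4 * C * (|z.im| / jap z ^ 2) := by
  obtain ⟨r, hnorm, hinner, hsub⟩ := exists_real_norm_eq_and_inner_nonneg_and_norm_sub_le z
  have hjap : ∀ w ∈ segment ℝ z r, jap z ^ 2 ≤ 2 * jap w ^ 2 := fun w hw => by
    rw [jap_sq, jap_sq]
    linarith [norm_sq_le_two_mul_norm_sq_of_mem_segment hnorm.le hinner hw]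
  have hseg : ∀ w ∈ segment ℝ z r, ‖fderiv ℝ F w‖ ≤ 2 * C / jap z ^ 2 := fun w hw => by
    have hw' := (le_div_iff₀ (jap_sq_pos w)).1 (hFD w)
    rw [le_div_iff₀ (jap_sq_pos z)]
    calc
      ‖fderiv ℝ F w‖ * jap z ^ 2 ≤ ‖fderiv ℝ F w‖ * (2 * jap w ^ 2) := by gcongr; exact hjap w hw
      _ ≤ 2 * C := by linarith
  have hbound : 0 ≤ 2 * C / jap z ^ 2 :=
    (norm_nonneg _).trans (hseg z (left_mem_segment ℝ _ _))
  calc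
    Metric.infDist (F z) (closure (Set.range fun x : ℝ => F x)) ≤ ‖F z - F r‖ :=
      dist_eq_norm (F z) (F r) ▸ Metric.infDist_le_dist_of_mem (subset_closure ⟨r, rfl⟩)
    _ ≤ 2 * C / jap z ^ 2 * ‖z - r‖ :=
      (convex_segment z (r : ℂ)).norm_image_sub_le_of_norm_fderiv_le (fun w _ => hF w) hseg
        (right_mem_segment ℝ _ _) (left_mem_segment ℝ _ _)
    _ ≤ 2 * C / jap z ^ 2 * (2 * |z.im|) := by gcongr
    _ = 4 * C * (|z.im| / jap z ^ 2) := by ring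

lemma norm_sub_zero_le_mul_arctan_norm (hF : Differentiable ℝ F)
    (hFD : ∀ z, ‖fderiv ℝ F z‖ ≤ C / jap z ^ 2) (z : ℂ) :
    ‖F z - F 0‖ ≤ C * Real.arctan ‖z‖ := by
  have hpath (t : ℝ) : HasDerivAt (fun s : ℝ => F (s • z) - F 0) (fderiv ℝ F (t • z) z) t := by
    have hline : HasDerivAt (fun s : ℝ => s • z) z t := by
      simpa using (hasDerivAt_id t).smul_const z
    exact ((hF _).hasFDerivAt.comp_hasDerivAt t hline).sub_const _
  have harctan (t : ℝ) : HasDerivAt (fun s : ℝ => C * Real.arctan (s * ‖z‖))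
      (C * (1 / (1 + (t * ‖z‖) ^ 2) * ‖z‖)) t := by
    simpa using ((hasDerivAt_id t).mul_const ‖z‖).arctan.const_mul C
  have hderiv (t : ℝ) : ‖fderiv ℝ F (t • z) z‖ ≤ C * (1 / (1 + (t * ‖z‖) ^ 2) * ‖z‖) :=
    calc
      ‖fderiv ℝ F (t • z) z‖ ≤ C / jap (t • z) ^ 2 * ‖z‖ :=
        (fderiv ℝ F (t • z)).le_of_opNorm_le (hFD _) z
      _ = C * (1 / (1 + (t * ‖z‖) ^ 2) * ‖z‖) := by
        rw [jap_sq, norm_smul, mul_pow, mul_pow, Real.norm_eq_abs, sq_abs]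
        ring
  simpa using image_norm_le_of_norm_deriv_right_le_deriv_boundary
    (fun t _ => (hpath t).continuousAt.continuousWithinAt) (fun t _ => (hpath t).hasDerivWithinAt)
    (by simp) harctan (fun t _ => hderiv t) (Set.right_mem_Icc.2 (zero_le_one' ℝ))

lemma exists_norm_le_of_norm_fderiv_le (hF : Differentiable ℝ F)
    (hFD : ∀ z, ‖fderiv ℝ F z‖ ≤ C / jap z ^ 2) : ∃ M : ℝ, ∀ z, ‖F z‖ ≤ M := by
  refine ⟨‖F 0‖ + |C| * (Real.pi / 2), fun z => ?_⟩
  have harctan : C * Real.arctan ‖z‖ ≤ |C| * (Real.pi / 2) := by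
    have := Real.arctan_nonneg.2 (norm_nonneg z)
    gcongr
    · exact le_abs_self C
    · exact (Real.arctan_lt_pi_div_two _).le
  linarith [norm_sub_norm_le (F z) (F 0), norm_sub_zero_le_mul_arctan_norm hF hFD z]

end Decay

lemma norm_dbar_comp_le_mul_pow {F G : ℂ → ℂ} {C L A B : ℝ} {N : ℕ} (hF : Differentiable ℝ F)
    (hFD : ∀ z, ‖fderiv ℝ F z‖ ≤ C / jap z ^ 2)
    (hFdbar : ∀ z, ‖dbar F z‖ ≤ A * (|z.im| / jap z ^ 2) ^ N)
    (hG : Differentiable ℝ G) (hGD : ∀ z, ‖fderiv ℝ G (F z)‖ ≤ L)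
    (hGdbar : ∀ z, ‖dbar G (F z)‖ ≤
      B * Metric.infDist (F z) (closure (Set.range fun x : ℝ => F x)) ^ N) (z : ℂ) :
    ‖dbar (G ∘ F) z‖ ≤ (C * (|B| * (4 * C) ^ N) + L * A) * (|z.im| / jap z ^ 2) ^ N := by
  have hDF : ‖fderiv ℝ F z‖ ≤ C :=
    (le_mul_of_one_le_right (norm_nonneg _) (one_le_jap_sq z)).trans
      ((le_div_iff₀ (jap_sq_pos z)).1 (hFD z))
  have hdbarG : ‖dbar G (F z)‖ ≤ |B| * (4 * C * (|z.im| / jap z ^ 2)) ^ N := by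
    refine (hGdbar z).trans ?_
    have := Metric.infDist_nonneg (x := F z) (s := closure (Set.range fun x : ℝ => F x))
    gcongr
    · exact le_abs_self B
    · exact infDist_closure_range_ofReal_le hF hFD z
  calc
    ‖dbar (G ∘ F) z‖ ≤ ‖fderiv ℝ F z‖ * ‖dbar G (F z)‖ + ‖fderiv ℝ G (F z)‖ * ‖dbar F z‖ :=
      norm_dbar_comp_le (hG _) (hF z)
    _ ≤ C * (|B| * (4 * C * (|z.im| / jap z ^ 2)) ^ N) +
        L * (A * (|z.im| / jap z ^ 2) ^ N) := by
      have hC : 0 ≤ C := (norm_nonneg _).trans hDF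
      have hL : 0 ≤ L := (norm_nonneg _).trans (hGD z)
      gcongr
      exacts [hGD z, hFdbar z]
    _ = (C * (|B| * (4 * C) ^ N) + L * A) * (|z.im| / jap z ^ 2) ^ N := by
      rw [mul_pow (4 * C)]
      ring

theorem composed_extension_general (F : ℂ → ℂ)
    (hF : Differentiable ℝ F)
    (hFdbar : ∀ N : ℕ, ∃ C : ℝ, ∀ z : ℂ, ‖dbar F z‖ ≤ C * (|z.im| / jap z ^ 2) ^ N)
    (hFD : ∃ C : ℝ, ∀ z : ℂ, ‖fderiv ℝ F z‖ ≤ C / jap z ^ 2)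
    (G : ℂ → ℂ)
    (hG : ContDiff ℝ 1 G)
    (hGdbar : ∀ N : ℕ, ∃ C : ℝ, ∀ ζ : ℂ,
      ‖dbar G ζ‖ ≤ C * (Metric.infDist ζ (closure (Set.range fun x : ℝ => F x))) ^ N) :
    (∃ M : ℝ, ∀ z : ℂ, ‖G (F z)‖ ≤ M) ∧
    (∃ C' : ℝ, ∀ z : ℂ, ‖fderiv ℝ (fun w : ℂ => G (F w)) z‖ ≤ C' / jap z ^ 2) ∧
    (∀ N : ℕ, ∃ C' : ℝ, ∀ z : ℂ,
      ‖dbar (fun w : ℂ => G (F w)) z‖ ≤ C' * (|z.im| / jap z ^ 2) ^ N) := by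
  obtain ⟨C, hC⟩ := hFD
  obtain ⟨M, hM⟩ := exists_norm_le_of_norm_fderiv_le hF hC
  have hball (z : ℂ) : F z ∈ Metric.closedBall 0 M := mem_closedBall_zero_iff.2 (hM z)
  have hcompact := isCompact_closedBall (0 : ℂ) M
  obtain ⟨M', hM'⟩ := hcompact.exists_bound_of_continuousOn hG.continuous.continuousOn
  obtain ⟨L, hL⟩ :=
    hcompact.exists_bound_of_continuousOn (hG.continuous_fderiv one_ne_zero).continuousOn
  have hGdiff := hG.differentiable one_ne_zero
  refine ⟨⟨M', fun z => hM' _ (hball z)⟩, ⟨L * C, fun z => ?_⟩, fun N => ?_⟩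
  · calc
      ‖fderiv ℝ (G ∘ F) z‖ = ‖(fderiv ℝ G (F z)).comp (fderiv ℝ F z)‖ := by
        rw [fderiv_comp z (hGdiff _) (hF z)]
      _ ≤ L * (C / jap z ^ 2) :=
        (ContinuousLinearMap.opNorm_comp_le _ _).trans
          (mul_le_mul (hL _ (hball z)) (hC z) (norm_nonneg _)
            ((norm_nonneg _).trans (hL _ (hball z))))
      _ = L * C / jap z ^ 2 := (mul_div_assoc _ _ _).symm
  · obtain ⟨A, hA⟩ := hFdbar N
    obtain ⟨B, hB⟩ := hGdbar N
    exact ⟨_, norm_dbar_comp_le_mul_pow hF hC hA hGdiff (fun z => hL _ (hball z)) fun z => hB (F z)⟩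

/-- Section 12, (12.14)–(12.15): if `f̃` is a bounded `C¹` extension with
`∂f̃/∂z̄ = O((|Im z|/⟨z⟩²)^N)` and `Df̃ = O(⟨z⟩^{-2})`, `K = closure f(ℝ)`, and
`g̃` is bounded, Lipschitz and `C¹` with `∂g̃/∂ζ̄ = O(dist(ζ,K)^∞)`, then
`h̃ = g̃ ∘ f̃` is a bounded extension of `g ∘ f` with `Dh̃ = O(⟨z⟩^{-2})` and
`∂h̃/∂z̄ = O((|Im z|/⟨z⟩²)^N)` for every `N`. -/
theorem composed_extension (F : ℂ → ℂ)
    (hF1 : ContDiff ℝ 1 F)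
    (hFb : ∃ M : ℝ, ∀ z : ℂ, ‖F z‖ ≤ M)
    (hFdbar : ∀ N : ℕ, ∃ C : ℝ, ∀ z : ℂ, ‖dbar F z‖ ≤ C * (|z.im| / jap z ^ 2) ^ N)
    (hFD : ∃ C : ℝ, ∀ z : ℂ, ‖fderiv ℝ F z‖ ≤ C / jap z ^ 2)
    (G : ℂ → ℂ)
    (hG1 : ContDiff ℝ 1 G)
    (hGb : ∃ M : ℝ, ∀ ζ : ℂ, ‖G ζ‖ ≤ M)
    (hGlip : ∃ L : NNReal, LipschitzWith L G)
    (hGdbar : ∀ N : ℕ, ∃ C : ℝ, ∀ ζ : ℂ,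
      ‖dbar G ζ‖ ≤ C * (Metric.infDist ζ (closure (Set.range fun x : ℝ => F x))) ^ N) :
    (∃ M : ℝ, ∀ z : ℂ, ‖G (F z)‖ ≤ M) ∧
    (∃ C' : ℝ, ∀ z : ℂ, ‖fderiv ℝ (fun w : ℂ => G (F w)) z‖ ≤ C' / jap z ^ 2) ∧
    (∀ N : ℕ, ∃ C' : ℝ, ∀ z : ℂ,
      ‖dbar (fun w : ℂ => G (F w)) z‖ ≤ C' * (|z.im| / jap z ^ 2) ^ N) :=
  composed_extension_general F (hF1.differentiable one_ne_zero) hFdbar hFD G hG1 hGdbar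
end
end
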